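/- Under the hypotheses of one iteration of projective splitting at (z, w₁,…,w_{n−1}), the separator function φ built from the points (x_i, y_i) satisfies φ(z, w₁,…,w_{n−1}) + Σ_{i∈F} L_i ‖z − x_i‖² ≥ (1−σ) ρ̲ Σ_{i∈B} ‖y_i − w_i‖² + ρ̲ Σ_{i∈F} ‖T_i z − w_i‖². -/

import Mathlib

open scoped RealInnerProductSpace

/-!
Once `wₙ = -(w₁ + ⋯ + wₙ₋₁)` is restored, `φ` is the symmetric sum of the `⟪z - xᵢ, yᵢ - wᵢ⟫`, and
each term is bounded separately. A backward step has `z - xᵢ = ρᵢ (yᵢ - wᵢ) - eᵢ`, so its term is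
`ρᵢ ‖yᵢ - wᵢ‖² - ⟪eᵢ, yᵢ - wᵢ⟫`, of which the error takes at most the fraction `σ`. A forward
step has `z - xᵢ = ρᵢ (Tᵢ z - wᵢ)`, so replacing `yᵢ` by `Tᵢ z` gives exactly `ρᵢ ‖Tᵢ z - wᵢ‖²`,
and the replacement costs `⟪z - xᵢ, Tᵢ z - Tᵢ xᵢ⟫ ≤ Lᵢ ‖z - xᵢ‖²`.
-/

section

variable {E ι : Type*} [SeminormedAddCommGroup E] [InnerProductSpace ℝ E]

theorem inner_le_mul_norm_sq_of_norm_le {u v : E} {L : ℝ} (h : ‖v‖ ≤ L * ‖u‖) :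
    ⟪u, v⟫ ≤ L * ‖u‖ ^ 2 :=
  calc
    ⟪u, v⟫ ≤ ‖u‖ * ‖v‖ := real_inner_le_norm u v
    _ ≤ ‖u‖ * (L * ‖u‖) := by gcongr
    _ = L * ‖u‖ ^ 2 := by ring

theorem mul_norm_sq_le_inner_of_backward_step {x y z w e : E} {ρ σ : ℝ}
    (hstep : x + ρ • y = z + ρ • w + e) (herr : ⟪e, y - w⟫ ≤ ρ * σ * ‖y - w‖ ^ 2) :
    (1 - σ) * ρ * ‖y - w‖ ^ 2 ≤ ⟪z - x, y - w⟫ := by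
  have hdisp : z - x = ρ • (y - w) - e := by
    rw [eq_sub_of_add_eq hstep, smul_sub]
    abel
  have hinner : ⟪z - x, y - w⟫ = ρ * ‖y - w‖ ^ 2 - ⟪e, y - w⟫ := by
    rw [hdisp, inner_sub_left, real_inner_smul_left, real_inner_self_eq_norm_sq]
  linarith

theorem mul_norm_sq_le_inner_add_of_forward_step {x y z w t : E} {ρ L : ℝ}
    (hstep : x = z - ρ • (t - w)) (hchange : ⟪z - x, t - y⟫ ≤ L * ‖z - x‖ ^ 2) :
    ρ * ‖t - w‖ ^ 2 ≤ ⟪z - x, y - w⟫ + L * ‖z - x‖ ^ 2 := by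
  have hdisp : z - x = ρ • (t - w) := by rw [hstep, sub_sub_cancel]
  calc
    ρ * ‖t - w‖ ^ 2 = ⟪z - x, t - w⟫ := by
      rw [hdisp, real_inner_smul_left, real_inner_self_eq_norm_sq]
    _ = ⟪z - x, y - w⟫ + ⟪z - x, t - y⟫ := by
      rw [← inner_add_right, add_comm, sub_add_sub_cancel]
    _ ≤ ⟪z - x, y - w⟫ + L * ‖z - x‖ ^ 2 := by gcongr

/-- The separator function `φ` of projective splitting for the points `(xᵢ, yᵢ)`. The argument `w`
is the full tuple `(w₁, …, wₙ)`; the paper's `φ` is the restriction to tuples with sum `0`. -/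
noncomputable def separator [Fintype ι] (x y : ι → E) (z : E) (w : ι → E) : ℝ :=
  ∑ i, ⟪z - x i, y i - w i⟫

theorem separator_snoc_neg_sum {m : ℕ} (x y : Fin (m + 1) → E) (z : E) (w : Fin m → E) :
    separator x y z (Fin.snoc w (-∑ i, w i)) =
      (∑ i : Fin m, ⟪z - x i.castSucc, y i.castSucc - w i⟫) +
        ⟪z - x (Fin.last m), y (Fin.last m) + ∑ i, w i⟫ := by
  simp only [separator, Fin.sum_univ_castSucc, Fin.snoc_castSucc, Fin.snoc_last, sub_neg_eq_add]

theorem separator_alt_lower_bound_one_iteration_general [Fintype ι] {B F : Finset ι}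
    (hBF : IsCompl B F) {T : ι → E → E} {L ρ : ι → ℝ} {x y w e : ι → E} {z : E} {σ ρlo : ℝ}
    (hσ : σ ≤ 1) (hρ : ∀ i, ρlo ≤ ρ i)
    (hT : ∀ i ∈ F, ∀ u v, ⟪u - v, T i u - T i v⟫ ≤ L i * ‖u - v‖ ^ 2)
    (hback : ∀ i ∈ B, x i + ρ i • y i = z + ρ i • w i + e i)
    (herr : ∀ i ∈ B, ⟪e i, y i - w i⟫ ≤ ρ i * σ * ‖y i - w i‖ ^ 2)
    (hforw : ∀ i ∈ F, x i = z - ρ i • (T i z - w i) ∧ y i = T i (x i)) :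
    (1 - σ) * ρlo * (∑ i ∈ B, ‖y i - w i‖ ^ 2) + ρlo * (∑ i ∈ F, ‖T i z - w i‖ ^ 2) ≤
      separator x y z w + ∑ i ∈ F, L i * ‖z - x i‖ ^ 2 := by
  have : 0 ≤ 1 - σ := sub_nonneg.2 hσ
  have hB : ∀ i ∈ B, (1 - σ) * ρlo * ‖y i - w i‖ ^ 2 ≤ ⟪z - x i, y i - w i⟫ := fun i hi =>
    calc
      (1 - σ) * ρlo * ‖y i - w i‖ ^ 2 ≤ (1 - σ) * ρ i * ‖y i - w i‖ ^ 2 := by gcongr; exact hρ i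
      _ ≤ ⟪z - x i, y i - w i⟫ := mul_norm_sq_le_inner_of_backward_step (hback i hi) (herr i hi)
  have hF : ∀ i ∈ F,
      ρlo * ‖T i z - w i‖ ^ 2 ≤ ⟪z - x i, y i - w i⟫ + L i * ‖z - x i‖ ^ 2 := fun i hi =>
    calc
      ρlo * ‖T i z - w i‖ ^ 2 ≤ ρ i * ‖T i z - w i‖ ^ 2 := by gcongr; exact hρ i
      _ ≤ ⟪z - x i, y i - w i⟫ + L i * ‖z - x i‖ ^ 2 :=
        mul_norm_sq_le_inner_add_of_forward_step (hforw i hi).1 ((hforw i hi).2 ▸ hT i hi z (x i))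
  calc
    _ = ∑ i ∈ B, (1 - σ) * ρlo * ‖y i - w i‖ ^ 2 + ∑ i ∈ F, ρlo * ‖T i z - w i‖ ^ 2 := by
      rw [Finset.mul_sum, Finset.mul_sum]
    _ ≤ ∑ i ∈ B, ⟪z - x i, y i - w i⟫ +
          ∑ i ∈ F, (⟪z - x i, y i - w i⟫ + L i * ‖z - x i‖ ^ 2) :=
      add_le_add (Finset.sum_le_sum hB) (Finset.sum_le_sum hF)
    _ = separator x y z w + ∑ i ∈ F, L i * ‖z - x i‖ ^ 2 := by
      rw [Finset.sum_add_distrib, ← add_assoc, hBF.sum_add_sum, separator]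

end

/-- Alternative lower bound for the separator function at the current
point of one iteration of projective splitting:
`φ(z,w₁,…,w_{n−1}) + Σ_{i∈F} Lᵢ‖z−xᵢ‖² ≥ (1−σ)ρ̲ Σ_{i∈B}‖yᵢ−wᵢ‖² + ρ̲ Σ_{i∈F}‖Tᵢz−wᵢ‖²`.
Here `n = m+1 ≥ 1`. -/
theorem separator_alt_lower_bound_one_iteration
    {H : Type*} [NormedAddCommGroup H] [InnerProductSpace ℝ H] [CompleteSpace H]
    (m : ℕ) (γ : ℝ) (hγ : 0 < γ)
    (B F : Finset (Fin (m+1))) (hBF : Disjoint B F) (hBFunion : B ∪ F = Finset.univ)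
    (T : Fin (m+1) → H → Set H) (Tf : Fin (m+1) → H → H) (L : Fin (m+1) → ℝ)
    (hTmono : ∀ i ∈ B, ∀ x x' y y' : H, y ∈ T i x → y' ∈ T i x' → 0 ≤ ⟪x - x', y - y'⟫)
    (hTfmono : ∀ i ∈ F, ∀ u v : H, 0 ≤ ⟪u - v, Tf i u - Tf i v⟫)
    (hL0 : ∀ i ∈ F, 0 ≤ L i)
    (hLip : ∀ i ∈ F, ∀ u v : H, ‖Tf i u - Tf i v‖ ≤ L i * ‖u - v‖)
    (z : H) (w : Fin m → H) (wfull : Fin (m+1) → H)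
    (hwfull : wfull = Fin.snoc w (-(∑ i : Fin m, w i)))
    (x y : Fin (m+1) → H) (ρ : Fin (m+1) → ℝ) (e : Fin (m+1) → H)
    (σ δ : ℝ) (hσ0 : 0 ≤ σ) (hσ1 : σ < 1) (hδ : 0 ≤ δ)
    (ρlo ρhi : ℝ) (ρbar : Fin (m+1) → ℝ)
    (hρlo : 0 < ρlo) (hρge : ∀ i, ρlo ≤ ρ i)
    (hρB : ∀ i ∈ B, ρ i ≤ ρhi)
    (hρF : ∀ i ∈ F, ρ i ≤ ρbar i ∧ ρbar i * L i < 1)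
    (hback : ∀ i ∈ B, y i ∈ T i (x i) ∧ x i + ρ i • y i = z + ρ i • wfull i + e i)
    (hforw : ∀ i ∈ F, x i = z - ρ i • (Tf i z - wfull i) ∧ y i = Tf i (x i))
    (herr1 : ∀ i ∈ B, -(σ * ‖z - x i‖ ^ 2) ≤ ⟪z - x i, e i⟫)
    (herr2 : ∀ i ∈ B, ⟪e i, y i - wfull i⟫ ≤ ρ i * σ * ‖y i - wfull i‖ ^ 2)
    (herr3 : ∀ i ∈ B, ‖e i‖ ^ 2 ≤ δ * ‖z - x i‖ ^ 2)
    (φval : ℝ)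
    (hφval : φval = (∑ i : Fin m, ⟪z - x i.castSucc, y i.castSucc - w i⟫)
      + ⟪z - x (Fin.last m), y (Fin.last m) + ∑ i : Fin m, w i⟫) :
    (1 - σ) * ρlo * (∑ i ∈ B, ‖y i - wfull i‖ ^ 2)
      + ρlo * (∑ i ∈ F, ‖Tf i z - wfull i‖ ^ 2)
      ≤ φval + ∑ i ∈ F, L i * ‖z - x i‖ ^ 2 := by
  rw [hφval, ← separator_snoc_neg_sum, ← hwfull]
  exact separator_alt_lower_bound_one_iteration_general ⟨hBF, codisjoint_iff.2 hBFunion⟩ hσ1.le hρge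
    (fun i hi u v => inner_le_mul_norm_sq_of_norm_le (hLip i hi u v))
    (fun i hi => (hback i hi).2) herr2 hforw
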